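/- Let d ≥ 3 be an integer and let f : ℝ^d → ℝ be a continuously differentiable, nonnegative function with compact support. Then ∫_{ℝ^d} ‖x‖^{2−d} f(x)^{d−2} dx = −((d−2)/2) ∫_{ℝ^d} ‖x‖^{3−d} f(x)^{d−3} ⟨∇f(x), x/‖x‖⟩ dx, where ∇f is the gradient of f and ⟨·,·⟩ is the Euclidean inner product; here the powers of f are natural-number powers (so f^{d−3} ≡ 1 when d = 3), and both integrands are assigned the value 0 at x = 0. -/

import Mathlib

open MeasureTheory RealInnerProductSpace

/-!
The identity is the infinitesimal form of a scaling law. If `w` is positively homogeneous of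
degree `s` on a space of dimension `d`, then `∫ w(x) h(t x) dx = t ^ (-(s + d)) ∫ w(x) h(x) dx`,
and differentiating at `t = 1` gives `∫ w(x) Dh(x) x dx = -(s + d) ∫ w(x) h(x) dx`. The theorem is
the case `w = ‖·‖ ^ s`, `h = f ^ n`, where `x = ‖x‖ • (x / ‖x‖)` turns `Dh(x) x` into a radial
derivative.
-/

section Dilation

variable {E F : Type*} [NormedAddCommGroup E] [NormedSpace ℝ E]
  [NormedAddCommGroup F] [NormedSpace ℝ F] {h : E → F}

lemma exists_norm_fderiv_smul_apply_le (hh : ContDiff ℝ 1 h) (hsupp : HasCompactSupport h)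
    {c : ℝ} (hc : 0 < c) :
    ∃ C R : ℝ, ∀ t, c ≤ |t| → ∀ x,
      ‖fderiv ℝ h (t • x) x‖ ≤ (Metric.closedBall 0 R).indicator (fun _ ↦ C) x := by
  obtain ⟨B, hB⟩ := (hsupp.fderiv ℝ).exists_bound_of_continuous (hh.continuous_fderiv one_ne_zero)
  obtain ⟨r, hr⟩ := (hsupp.fderiv ℝ).isCompact.isBounded.subset_closedBall 0
  refine ⟨B * (r / c), r / c, fun t ht x ↦ ?_⟩
  by_cases hx : x ∈ Metric.closedBall 0 (r / c)
  · rw [Set.indicator_of_mem hx]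
    have hB0 : 0 ≤ B := (norm_nonneg _).trans (hB 0)
    exact (ContinuousLinearMap.le_of_opNorm_le _ (hB _) x).trans <|
      mul_le_mul_of_nonneg_left (mem_closedBall_zero_iff.1 hx) hB0
  · have hzero : fderiv ℝ h (t • x) = 0 := by
      refine image_eq_zero_of_notMem_tsupport fun hmem ↦ hx ?_
      have hle : |t| * ‖x‖ ≤ r := by simpa [norm_smul] using hr hmem
      rw [mem_closedBall_zero_iff, le_div_iff₀' hc]
      exact (mul_le_mul_of_nonneg_right ht (norm_nonneg x)).trans hle
    simp [hx, hzero]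

variable [MeasurableSpace E] [BorelSpace E] {μ : Measure E} {w : E → ℝ}

lemma hasDerivAt_integral_smul_comp_smul [ProperSpace E] (hw : LocallyIntegrable w μ)
    (hh : ContDiff ℝ 1 h) (hsupp : HasCompactSupport h) {t : ℝ} (ht : t ≠ 0) :
    HasDerivAt (fun u : ℝ ↦ ∫ x, w x • h (u • x) ∂μ) (∫ x, w x • fderiv ℝ h (t • x) x ∂μ) t := by
  obtain ⟨C, R, hCR⟩ := exists_norm_fderiv_smul_apply_le hh hsupp (half_pos (abs_pos.2 ht))
  have hnhds : {u : ℝ | |t| / 2 ≤ |u|} ∈ nhds t :=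
    (continuous_abs.tendsto t).eventually_const_le (half_lt_self (abs_pos.2 ht))
  have hint {u : ℝ} (hu : u ≠ 0) : Integrable (fun x ↦ w x • h (u • x)) μ :=
    hw.integrable_smul_right_of_hasCompactSupport (by fun_prop) (hsupp.comp_smul hu)
  have hfderiv : Continuous fun x ↦ fderiv ℝ h (t • x) x :=
    ((hh.continuous_fderiv one_ne_zero).comp (continuous_const_smul t)).clm_apply continuous_id
  have hbound : Integrable
      (fun x ↦ ‖w x‖ * (Metric.closedBall 0 R).indicator (fun _ ↦ C) x) μ := by
    have hball := (hw.integrableOn_isCompact (isCompact_closedBall 0 R)).norm.mul_const C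
    exact (IntegrableOn.integrable_indicator hball Metric.isClosed_closedBall.measurableSet).congr
      (.of_forall fun x ↦ Set.indicator_mul_right _ (fun x ↦ ‖w x‖) fun _ ↦ C)
  have hderiv (x : E) (u : ℝ) :
      HasDerivAt (fun u : ℝ ↦ w x • h (u • x)) (w x • fderiv ℝ h (u • x) x) u := by
    have hline : HasDerivAt (fun u : ℝ ↦ u • x) x u := by
      simpa using (hasDerivAt_id u).smul_const x
    exact ((hh.differentiable one_ne_zero _).hasFDerivAt.comp_hasDerivAt u hline).const_smul (w x)
  refine (hasDerivAt_integral_of_dominated_loc_of_deriv_le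
    (F' := fun u x ↦ w x • fderiv ℝ h (u • x) x) hnhds
    ((eventually_ne_nhds ht).mono fun u hu ↦ (hint hu).aestronglyMeasurable) (hint ht)
    (hw.aestronglyMeasurable.smul hfderiv.aestronglyMeasurable)
    (.of_forall fun x u hu ↦ ?_) hbound (.of_forall fun x u _ ↦ hderiv x u)).2
  rw [norm_smul]
  exact mul_le_mul_of_nonneg_left (hCR u hu x) (norm_nonneg _)

variable [FiniteDimensional ℝ E] [μ.IsAddHaarMeasure] {s : ℝ}

lemma integral_smul_comp_smul_of_homogeneous
    (hhom : ∀ t : ℝ, 0 < t → ∀ x, w (t • x) = t ^ s * w x) (h : E → F) {t : ℝ} (ht : 0 < t) :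
    ∫ x, w x • h (t • x) ∂μ = t ^ (-(s + Module.finrank ℝ E)) • ∫ x, w x • h x ∂μ := by
  have hw (x : E) : w x = t ^ (-s) * w (t • x) := by
    rw [hhom t ht, ← mul_assoc, ← Real.rpow_add ht, neg_add_cancel, Real.rpow_zero, one_mul]
  calc ∫ x, w x • h (t • x) ∂μ
      = t ^ (-s) • ∫ x, w (t • x) • h (t • x) ∂μ := by
        rw [← integral_smul]
        exact integral_congr_ae (.of_forall fun x ↦ by simp only [hw x, mul_smul])
    _ = t ^ (-s) • (t ^ Module.finrank ℝ E)⁻¹ • ∫ x, w x • h x ∂μ := by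
        rw [Measure.integral_comp_smul_of_nonneg μ (fun x ↦ w x • h x) t (hR := ht.le)]
    _ = t ^ (-(s + Module.finrank ℝ E)) • ∫ x, w x • h x ∂μ := by
        rw [smul_smul, neg_add, Real.rpow_add ht, Real.rpow_neg ht.le (Module.finrank ℝ E : ℝ),
          Real.rpow_natCast]

theorem integral_smul_fderiv_apply_self_of_homogeneous (hw : LocallyIntegrable w μ)
    (hhom : ∀ t : ℝ, 0 < t → ∀ x, w (t • x) = t ^ s * w x)
    (hh : ContDiff ℝ 1 h) (hsupp : HasCompactSupport h) :
    ∫ x, w x • fderiv ℝ h x x ∂μ = -(s + Module.finrank ℝ E) • ∫ x, w x • h x ∂μ := by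
  have := FiniteDimensional.proper_real E
  have hleft : HasDerivAt (fun t : ℝ ↦ ∫ x, w x • h (t • x) ∂μ)
      (∫ x, w x • fderiv ℝ h x x ∂μ) 1 := by
    simpa using hasDerivAt_integral_smul_comp_smul hw hh hsupp one_ne_zero
  have hright : HasDerivAt (fun t : ℝ ↦ t ^ (-(s + Module.finrank ℝ E)) • ∫ x, w x • h x ∂μ)
      (-(s + Module.finrank ℝ E) • ∫ x, w x • h x ∂μ) 1 := by
    simpa using (Real.hasDerivAt_rpow_const (.inl one_ne_zero)).smul_const (∫ x, w x • h x ∂μ)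
  refine hleft.unique (hright.congr_of_eventuallyEq ?_)
  filter_upwards [lt_mem_nhds one_pos] with t ht
  exact integral_smul_comp_smul_of_homogeneous hhom h ht

end Dilation

section NormWeight

variable {E : Type*} [NormedAddCommGroup E] [NormedSpace ℝ E]

lemma norm_smul_rpow {t : ℝ} (ht : 0 ≤ t) (x : E) (s : ℝ) : ‖t • x‖ ^ s = t ^ s * ‖x‖ ^ s := by
  rw [norm_smul_of_nonneg ht, Real.mul_rpow ht (norm_nonneg x)]

lemma norm_rpow_add_one_smul_inv_norm_smul (x : E) (s : ℝ) :
    ‖x‖ ^ (s + 1) • ‖x‖⁻¹ • x = ‖x‖ ^ s • x := by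
  rcases eq_or_ne x 0 with rfl | hx
  · simp
  have hnorm : ‖x‖ ≠ 0 := norm_ne_zero_iff.2 hx
  rw [smul_smul, Real.rpow_add_one hnorm, mul_inv_cancel_right₀ hnorm]

variable [FiniteDimensional ℝ E] [MeasurableSpace E] [BorelSpace E]
  {μ : Measure E} [μ.IsAddHaarMeasure] {s : ℝ}

lemma locallyIntegrable_norm_rpow (hs : -(Module.finrank ℝ E : ℝ) < s) :
    LocallyIntegrable (fun x : E ↦ ‖x‖ ^ s) μ := by
  rcases subsingleton_or_nontrivial E with _ | _
  · simpa [Subsingleton.elim _ (0 : E)] using locallyIntegrable_const ((0 : ℝ) ^ s)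
  · refine locallyIntegrable_of_norm_le_rpow (C := 1) (α := -s) Module.finrank_pos (by linarith)
      (.of_forall fun x ↦ ?_) (measurable_norm.pow_const s).aestronglyMeasurable
    simp [abs_of_nonneg (Real.rpow_nonneg (norm_nonneg x) s)]

theorem radial_integration_by_parts_euclidean_general (hs : -(Module.finrank ℝ E : ℝ) < s)
    {n : ℕ} (hn : n ≠ 0) {f : E → ℝ} (hf : ContDiff ℝ 1 f) (hsupp : HasCompactSupport f) :
    ∫ x, ‖x‖ ^ s * f x ^ n ∂μ = -(n / (s + Module.finrank ℝ E)) *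
      ∫ x, ‖x‖ ^ (s + 1) * f x ^ (n - 1) * fderiv ℝ f x (‖x‖⁻¹ • x) ∂μ := by
  have hfderiv (x : E) : fderiv ℝ (fun y ↦ f y ^ n) x x = n * (f x ^ (n - 1) * fderiv ℝ f x x) := by
    simp [fderiv_fun_pow n (hf.differentiable one_ne_zero x), mul_assoc]
  have hradial (x : E) : ‖x‖ ^ (s + 1) * f x ^ (n - 1) * fderiv ℝ f x (‖x‖⁻¹ • x) =
      ‖x‖ ^ s * (f x ^ (n - 1) * fderiv ℝ f x x) := by
    have happly := congrArg (fderiv ℝ f x) (norm_rpow_add_one_smul_inv_norm_smul x s)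
    rw [map_smul _ (‖x‖ ^ (s + 1)), map_smul _ (‖x‖ ^ s), smul_eq_mul, smul_eq_mul] at happly
    linear_combination f x ^ (n - 1) * happly
  have heuler : n * ∫ x, ‖x‖ ^ s * (f x ^ (n - 1) * fderiv ℝ f x x) ∂μ =
      -(s + Module.finrank ℝ E) * ∫ x, ‖x‖ ^ s * f x ^ n ∂μ := by
    simpa only [hfderiv, smul_eq_mul, mul_left_comm _ (n : ℝ), integral_const_mul] using
      integral_smul_fderiv_apply_self_of_homogeneous (μ := μ) (locallyIntegrable_norm_rpow hs)
        (fun t ht x ↦ norm_smul_rpow ht.le x s) (hf.pow n)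
        (hsupp.comp_left (g := (· ^ n)) (zero_pow hn))
  have hdegree : s + Module.finrank ℝ E ≠ 0 := by linarith
  simp_rw [hradial]
  rw [neg_mul, div_mul_eq_mul_div, heuler, neg_mul, neg_div, neg_neg,
    mul_div_cancel_left₀ _ hdegree]

end NormWeight

/-- Integration-by-parts identity underlying the weighted Sobolev embedding: for an integer
`d ≥ 3` and a continuously differentiable, nonnegative, compactly supported function
`f : ℝ^d → ℝ`,
`∫ ‖x‖^{2−d} f(x)^{d−2} dx = −((d−2)/2) ∫ ‖x‖^{3−d} f(x)^{d−3} ⟨∇f(x), x/‖x‖⟩ dx`.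
The powers of `‖x‖` are real powers (`rpow`), the powers of `f` are natural-number powers
(so `f^{d−3} ≡ 1` when `d = 3`), and both integrands vanish at `x = 0`: at the origin the
left integrand has weight `0^{2−d} = 0`, while on the right the unit radial vector
`x/‖x‖ = ‖x‖⁻¹ • x` is `0`. -/
theorem radial_integration_by_parts_euclidean
    (d : ℕ) (hd : 3 ≤ d) (f : EuclideanSpace ℝ (Fin d) → ℝ)
    (hf : ContDiff ℝ 1 f) (hsupp : HasCompactSupport f)
    (hpos : ∀ x, 0 ≤ f x) :
    ∫ x, ‖x‖ ^ ((2 : ℝ) - d) * f x ^ (d - 2)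
      = -(((d : ℝ) - 2) / 2) *
          ∫ x, ‖x‖ ^ ((3 : ℝ) - d) * f x ^ (d - 3) * ⟪gradient f x, ‖x‖⁻¹ • x⟫ := by
  have hs : -(Module.finrank ℝ (EuclideanSpace ℝ (Fin d)) : ℝ) < 2 - d := by simp
  have key := radial_integration_by_parts_euclidean_general (μ := volume) hs
    (Nat.sub_ne_zero_of_lt hd) hf hsupp
  simpa [inner_gradient_left, Nat.cast_sub (by lia : 2 ≤ d), Nat.sub_sub,
    show (2 : ℝ) - d + 1 = 3 - d by ring] using key
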